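/- Let P be a path poset of rank n and Q a box poset of the same rank n. Then the diamond product of P and Q is Macaulay if and only if Q is a path poset or Q is a 2-by-k box poset for some k. -/

import Mathlib

/-!
Write `eⱼ` for the ranks of the factors of the box, so `n = ∑ eⱼ`. The dividing line is whether
deleting some factor leaves total rank at most `1`; since all `eⱼ ≥ 1`, this says exactly that
the box is a path or `2 × l` (`shape_iff`).

If some `j` has this property, the box has at most two elements in each level, distinguished by
the sum of their coordinates other than `j`, and the diamond product has at most three. Put the
chain element first, then the box element with that sum equal to `1`, then the other one. In the
middle levels the shadow of an initial segment is the same initial segment one level higher,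
whereas the shadow of any set is at least as large as the set (`isMacaulay_of_idx`).

Otherwise every atom of the box has two upper covers, and dually every coatom has two lower covers
(`box_two_up`, `box_two_down`). The atom of the path is then the only one with a shadow of size
`1`, so it comes first in its level, and by taking shadows the path element comes first in every
level up to `n - 2`. Remove from level `n - 2` its last element: this initial segment contains the
path element and meets the lower covers of every box coatom, so its shadow is all of level
`n - 1`. The set of all box elements of level `n - 2` has the same size, but its shadow misses the
path (`not_isMacaulay`).

Both arguments use that the diamond product is graded, so that covering can be read off from the
order and the rank (`diamond_covBy_iff`). This fails for `n = 0`, where the encoded diamond product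
has two elements of rank `0`; it is then not Macaulay, in agreement with `k = 0`
(`not_isMacaulay_zero`).
-/


open Finset

instance {α : Type*} [Fintype α] : Fintype (WithBot α) := inferInstanceAs (Fintype (Option α))
instance {α : Type*} [Fintype α] : Fintype (WithTop α) := inferInstanceAs (Fintype (Option α))

variable {α : Type*}

open Classical in
noncomputable def shadow [PartialOrder α] [Fintype α] (A : Finset α) : Finset α :=
  Finset.univ.filter (fun b => ∃ a ∈ A, a ⋖ b)

def IsRankFn [PartialOrder α] (rank : α → ℕ) : Prop :=
  (∃ x, rank x = 0 ∧ ∀ y, x ≤ y) ∧ ∀ a b : α, a ⋖ b → rank b = rank a + 1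

def IsInitSeg [PartialOrder α] (rank : α → ℕ) (lt : α → α → Prop) (d : ℕ)
    (S : Finset α) : Prop :=
  (∀ x ∈ S, rank x = d) ∧ ∀ a ∈ S, ∀ b, rank b = d → lt a b → b ∈ S

def MacaulayWith [PartialOrder α] [Fintype α] (rank : α → ℕ)
    (lt : α → α → Prop) : Prop :=
  IsTrichotomous α lt ∧ IsTrans α lt ∧ IsIrrefl α lt ∧
  (∀ d (A S : Finset α), (∀ x ∈ A, rank x = d) → IsInitSeg rank lt d S →
    S.card = A.card → (shadow S).card ≤ (shadow A).card) ∧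
  (∀ d (S : Finset α), IsInitSeg rank lt d S → IsInitSeg rank lt (d + 1) (shadow S))

def IsMacaulay [PartialOrder α] [Fintype α] (rank : α → ℕ) : Prop :=
  ∃ lt : α → α → Prop, MacaulayWith rank lt

abbrev Wedge (P Q : Type*) [PartialOrder P] [PartialOrder Q] [OrderBot P] [OrderBot Q] :=
  WithBot ({p : P // p ≠ ⊥} ⊕ {q : Q // q ≠ ⊥})

def wedgeRank {P Q : Type*} [PartialOrder P] [PartialOrder Q] [OrderBot P] [OrderBot Q]
    (rP : P → ℕ) (rQ : Q → ℕ) : Wedge P Q → ℕ :=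
  WithBot.recBotCoe 0 (Sum.elim (fun p => rP p.1) (fun q => rQ q.1))

open Classical in
noncomputable def wedgeInl {P Q : Type*} [PartialOrder P] [PartialOrder Q] [OrderBot P]
    [OrderBot Q] (p : P) : Wedge P Q :=
  if h : p = ⊥ then ⊥ else
    ((Sum.inl ⟨p, h⟩ : {p : P // p ≠ ⊥} ⊕ {q : Q // q ≠ ⊥}) : Wedge P Q)

open Classical in
noncomputable def wedgeInr {P Q : Type*} [PartialOrder P] [PartialOrder Q] [OrderBot P]
    [OrderBot Q] (q : Q) : Wedge P Q :=
  if h : q = ⊥ then ⊥ else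
    ((Sum.inr ⟨q, h⟩ : {p : P // p ≠ ⊥} ⊕ {q : Q // q ≠ ⊥}) : Wedge P Q)

abbrev Diamond (P Q : Type*) [PartialOrder P] [PartialOrder Q] [OrderBot P] [OrderBot Q]
    [OrderTop P] [OrderTop Q] :=
  WithBot (WithTop ({p : P // p ≠ ⊥ ∧ p ≠ ⊤} ⊕ {q : Q // q ≠ ⊥ ∧ q ≠ ⊤}))

def diamondRank {P Q : Type*} [PartialOrder P] [PartialOrder Q] [OrderBot P] [OrderBot Q]
    [OrderTop P] [OrderTop Q] (rP : P → ℕ) (rQ : Q → ℕ) (s : ℕ) : Diamond P Q → ℕ :=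
  WithBot.recBotCoe 0 (WithTop.recTopCoe s (Sum.elim (fun p => rP p.1) (fun q => rQ q.1)))

def diamondInl {P Q : Type*} [PartialOrder P] [PartialOrder Q] [OrderBot P] [OrderBot Q]
    [OrderTop P] [OrderTop Q] (p : {p : P // p ≠ ⊥ ∧ p ≠ ⊤}) : Diamond P Q :=
  (((Sum.inl p : {p : P // p ≠ ⊥ ∧ p ≠ ⊤} ⊕ {q : Q // q ≠ ⊥ ∧ q ≠ ⊤}) :
    WithTop ({p : P // p ≠ ⊥ ∧ p ≠ ⊤} ⊕ {q : Q // q ≠ ⊥ ∧ q ≠ ⊤})) : Diamond P Q)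

abbrev Box (a b : ℕ) := Fin a × Fin b

def boxRank {a b : ℕ} : Box a b → ℕ := fun p => p.1.val + p.2.val

abbrev BoxF {n : ℕ} (d : Fin n → ℕ) := ∀ i, Fin (d i + 1)

def boxFRank {n : ℕ} {d : Fin n → ℕ} : BoxF d → ℕ := fun x => ∑ i, (x i).val

def diamondInr {P Q : Type*} [PartialOrder P] [PartialOrder Q] [OrderBot P] [OrderBot Q]
    [OrderTop P] [OrderTop Q] (q : {q : Q // q ≠ ⊥ ∧ q ≠ ⊤}) : Diamond P Q :=
  (((Sum.inr q : {p : P // p ≠ ⊥ ∧ p ≠ ⊤} ⊕ {q : Q // q ≠ ⊥ ∧ q ≠ ⊤}) :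
    WithTop ({p : P // p ≠ ⊥ ∧ p ≠ ⊤} ⊕ {q : Q // q ≠ ⊥ ∧ q ≠ ⊤})) : Diamond P Q)

abbrev WedgeFam {ι : Type*} (P : ι → Type*) [∀ i, PartialOrder (P i)]
    [∀ i, OrderBot (P i)] :=
  WithBot (Σ i, {p : P i // p ≠ ⊥})

def wedgeFamRank {ι : Type*} {P : ι → Type*} [∀ i, PartialOrder (P i)]
    [∀ i, OrderBot (P i)] (rank : ∀ i, P i → ℕ) : WedgeFam P → ℕ :=
  WithBot.recBotCoe 0 (fun s => rank s.1 s.2.1)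

abbrev DiamondFam {ι : Type*} (P : ι → Type*) [∀ i, PartialOrder (P i)]
    [∀ i, OrderBot (P i)] [∀ i, OrderTop (P i)] :=
  WithBot (WithTop (Σ i, {p : P i // p ≠ ⊥ ∧ p ≠ ⊤}))

def diamondFamRank {ι : Type*} {P : ι → Type*} [∀ i, PartialOrder (P i)]
    [∀ i, OrderBot (P i)] [∀ i, OrderTop (P i)] (rank : ∀ i, P i → ℕ) (s : ℕ) :
    DiamondFam P → ℕ :=
  WithBot.recBotCoe 0 (WithTop.recTopCoe s (fun x => rank x.1 x.2.1))

/-! ### Graded posets -/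

/-- A bounded poset graded of rank `n` by `r`: `r` is strictly monotone, runs from `0` at `⊥` to
`n` at `⊤`, and an interval spanning at least two ranks has an interior point. -/
structure GradedBy {P : Type*} [PartialOrder P] [BoundedOrder P] (r : P → ℕ) (n : ℕ) : Prop where
  bot : r ⊥ = 0
  top : r ⊤ = n
  mono : ∀ x y, x < y → r x < r y
  dense : ∀ x y, x < y → r x + 1 < r y → ∃ z, x < z ∧ z < y

theorem GradedBy.proper {P : Type*} [PartialOrder P] [BoundedOrder P] {r : P → ℕ} {n : ℕ}
    (h : GradedBy r n) {x : P} (h1 : 0 < r x) (h2 : r x < n) : x ≠ ⊥ ∧ x ≠ ⊤ := by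
  constructor <;> rintro rfl
  · rw [h.bot] at h1; omega
  · rw [h.top] at h2; omega

theorem gradedBy_fin (n : ℕ) : GradedBy (Fin.val : Fin (n + 1) → ℕ) n where
  bot := rfl
  top := rfl
  mono x y h := h
  dense x y h h' := ⟨⟨x.1 + 1, by omega⟩, Nat.lt_succ_self x.1, h'⟩

/-! ### Levels and covers of a box -/

section Box

variable {k : ℕ} {e : Fin k → ℕ}

theorem boxFRank_erase (x : BoxF e) (j : Fin k) :
    boxFRank x = ∑ l ∈ univ.erase j, (x l).val + (x j).val :=
  (sum_erase_add _ _ (mem_univ j)).symm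

theorem sum_erase_le (x : BoxF e) (j : Fin k) :
    ∑ l ∈ univ.erase j, (x l).val ≤ ∑ l ∈ univ.erase j, e l :=
  sum_le_sum fun l _ => Nat.lt_succ_iff.1 (x l).2

theorem box_up (x : BoxF e) (j : Fin k) (h : (x j).val < e j) :
    ∃ y : BoxF e, x < y ∧ boxFRank y = boxFRank x + 1 ∧ (y j).val = (x j).val + 1 ∧
      ∀ l, l ≠ j → y l = x l := by
  refine ⟨Function.update x j ⟨x j + 1, by omega⟩, ?_, ?_, by simp, fun l hl => by simp [hl]⟩
  · rw [lt_update_self_iff]; simp [Fin.lt_def]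
  · rw [boxFRank_erase _ j, boxFRank_erase x j]
    have : ∑ l ∈ univ.erase j, (Function.update x j ⟨x j + 1, by omega⟩ l).val
        = ∑ l ∈ univ.erase j, (x l).val :=
      sum_congr rfl fun l hl => by simp [(mem_erase.1 hl).1]
    rw [this]; simp; omega

theorem box_down (x : BoxF e) (j : Fin k) (h : 1 ≤ (x j).val) :
    ∃ y : BoxF e, y < x ∧ boxFRank x = boxFRank y + 1 ∧ (y j).val + 1 = (x j).val ∧
      ∀ l, l ≠ j → y l = x l := by
  have hj := (x j).2
  refine ⟨Function.update x j ⟨x j - 1, by omega⟩, ?_, ?_, by simp; omega,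
    fun l hl => by simp [hl]⟩
  · rw [update_lt_self_iff]; change (x j).val - 1 < (x j).val; omega
  · rw [boxFRank_erase _ j, boxFRank_erase (Function.update _ _ _) j]
    have : ∑ l ∈ univ.erase j, (Function.update x j ⟨x j - 1, by omega⟩ l).val
        = ∑ l ∈ univ.erase j, (x l).val :=
      sum_congr rfl fun l hl => by simp [(mem_erase.1 hl).1]
    rw [this]; simp; omega

theorem boxFRank_strictMono (x y : BoxF e) (h : x < y) : boxFRank x < boxFRank y := by
  obtain ⟨hle, j, hj⟩ := Pi.lt_def.1 h
  exact sum_lt_sum (fun l _ => hle l) ⟨j, mem_univ _, hj⟩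

theorem gradedBy_box : GradedBy (boxFRank : BoxF e → ℕ) (∑ i, e i) where
  bot := sum_eq_zero fun _ _ => rfl
  top := by simp [boxFRank, Fin.top_eq_last]
  mono := boxFRank_strictMono
  dense x y h h' := by
    obtain ⟨hle, j, hj⟩ := Pi.lt_def.1 h
    have hj' : (x j).val < (y j).val := hj
    have := (y j).2
    obtain ⟨z, hxz, hr, hzj, hz⟩ := box_up x j (by omega)
    refine ⟨z, hxz, lt_of_le_of_ne (fun l => ?_) (by rintro rfl; omega)⟩
    by_cases hl : l = j
    · subst hl; rw [Fin.le_def]; omega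
    · rw [hz l hl]; exact hle l

/-- If deleting any factor leaves total rank at least `2`, then an atom has two upper covers:
otherwise all coordinates but one would be full, making the rank at least `2`. -/
theorem box_two_up (he : ∀ j, e j + 2 ≤ ∑ i, e i) (h0 : 3 ≤ ∑ i, e i) (x : BoxF e)
    (hx : boxFRank x = 1) :
    ∃ u v : BoxF e, u ≠ v ∧ x < u ∧ x < v ∧ boxFRank u = 2 ∧ boxFRank v = 2 := by
  have h1 : ∃ j, (x j).val < e j := by
    by_contra! h
    have : ∑ i, e i ≤ boxFRank x := sum_le_sum fun l _ => h l
    omega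
  obtain ⟨j, hj⟩ := h1
  have h2 : ∃ i, i ≠ j ∧ (x i).val < e i := by
    by_contra! h
    have h3 : ∑ l ∈ univ.erase j, e l ≤ ∑ l ∈ univ.erase j, (x l).val :=
      sum_le_sum fun l hl => h l (mem_erase.1 hl).1
    have h4 := boxFRank_erase x j
    have h5 := sum_erase_add univ e (mem_univ j)
    have h6 := he j
    omega
  obtain ⟨i, hij, hi⟩ := h2
  obtain ⟨u, hu, hur, huj, hul⟩ := box_up x j hj
  obtain ⟨v, hv, hvr, hvi, hvl⟩ := box_up x i hi
  refine ⟨u, v, ?_, hu, hv, by omega, by omega⟩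
  rintro rfl
  rw [hul i hij] at hvi
  omega

/-- The order dual of `box_two_up`, for lower covers of a coatom. -/
theorem box_two_down (he : ∀ j, e j + 2 ≤ ∑ i, e i) (h0 : 3 ≤ ∑ i, e i) (x : BoxF e)
    (hx : boxFRank x + 1 = ∑ i, e i) :
    ∃ u v : BoxF e, u ≠ v ∧ u < x ∧ v < x ∧ boxFRank u + 2 = ∑ i, e i ∧
      boxFRank v + 2 = ∑ i, e i := by
  have h1 : ∃ j, 1 ≤ (x j).val := by
    by_contra! h
    have : boxFRank x = 0 := sum_eq_zero fun l _ => by have := h l; omega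
    omega
  obtain ⟨j, hj⟩ := h1
  have h2 : ∃ i, i ≠ j ∧ 1 ≤ (x i).val := by
    by_contra! h
    have h3 : ∑ l ∈ univ.erase j, (x l).val = 0 :=
      sum_eq_zero fun l hl => by have := h l (mem_erase.1 hl).1; omega
    have h4 := boxFRank_erase x j
    have h6 := he j
    have := (x j).2
    omega
  obtain ⟨i, hij, hi⟩ := h2
  obtain ⟨u, hu, hur, huj, hul⟩ := box_down x j hj
  obtain ⟨v, hv, hvr, hvi, hvl⟩ := box_down x i hi
  refine ⟨u, v, ?_, hu, hv, by omega, by omega⟩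
  rintro rfl
  rw [hul i hij] at hvi
  omega

theorem box_inj (h1 : ∀ i, 1 ≤ e i) (j : Fin k) (hj : ∑ i, e i ≤ e j + 1) (x y : BoxF e)
    (hs : ∑ l ∈ univ.erase j, (x l).val = ∑ l ∈ univ.erase j, (y l).val)
    (hr : boxFRank x = boxFRank y) : x = y := by
  have h5 := sum_erase_add univ e (mem_univ j)
  have hx := boxFRank_erase x j
  have hy := boxFRank_erase y j
  funext l
  apply Fin.ext
  by_cases hl : l = j
  · subst hl; omega
  -- the factors other than `j` have total rank at most `1`, so `l` is the only one
  have huniq : ∀ m, m ∈ univ.erase j → m ≠ l → False := by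
    intro m hm hml
    have h6 := sum_erase_add (univ.erase j) e (mem_erase.2 ⟨hl, mem_univ l⟩)
    have h7 : e m ≤ ∑ i ∈ (univ.erase j).erase l, e i :=
      single_le_sum (f := e) (fun _ _ => Nat.zero_le _) (mem_erase.2 ⟨hml, hm⟩)
    have := h1 m
    have := h1 l
    omega
  have key : ∀ z : BoxF e, ∑ m ∈ univ.erase j, (z m).val = (z l).val := fun z =>
    sum_eq_single l (fun m hm hml => (huniq m hm hml).elim)
      (fun h => (h (mem_erase.2 ⟨hl, mem_univ l⟩)).elim)
  rw [← key, ← key, hs]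

end Box

/-! ### Order and covering in a diamond product -/

section DiamondOrder

variable {P Q : Type*} [PartialOrder P] [PartialOrder Q] [BoundedOrder P] [BoundedOrder Q]

theorem diamond_cases (x : Diamond P Q) :
    x = ⊥ ∨ x = ⊤ ∨ (∃ p, x = diamondInl p) ∨ ∃ q, x = diamondInr q := by
  induction x using WithBot.recBotCoe with
  | bot => exact Or.inl rfl
  | coe x =>
    induction x using WithTop.recTopCoe with
    | top => exact Or.inr (Or.inl rfl)
    | coe x =>
      rcases x with p | q
      · exact Or.inr (Or.inr (Or.inl ⟨p, rfl⟩))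
      · exact Or.inr (Or.inr (Or.inr ⟨q, rfl⟩))

variable (p p' : {p : P // p ≠ ⊥ ∧ p ≠ ⊤}) (q q' : {q : Q // q ≠ ⊥ ∧ q ≠ ⊤})
variable (rP : P → ℕ) (rQ : Q → ℕ) (n : ℕ)

@[simp] theorem inl_lt_inl :
    (diamondInl p : Diamond P Q) < diamondInl p' ↔ p.1 < p'.1 := by
  simp [diamondInl]

@[simp] theorem inr_lt_inr :
    (diamondInr q : Diamond P Q) < diamondInr q' ↔ q.1 < q'.1 := by
  simp [diamondInr]

@[simp] theorem not_inl_lt_inr : ¬ (diamondInl p : Diamond P Q) < diamondInr q := by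
  simp [diamondInl, diamondInr]

@[simp] theorem not_inr_lt_inl : ¬ (diamondInr q : Diamond P Q) < diamondInl p := by
  simp [diamondInl, diamondInr]

@[simp] theorem inl_ne_inr : (diamondInl p : Diamond P Q) ≠ diamondInr q := by
  simp [diamondInl, diamondInr]

@[simp] theorem inl_inj : (diamondInl p : Diamond P Q) = diamondInl p' ↔ p = p' := by
  simp [diamondInl]

@[simp] theorem inr_inj : (diamondInr q : Diamond P Q) = diamondInr q' ↔ q = q' := by
  simp [diamondInr]

@[simp] theorem bot_lt_inl : (⊥ : Diamond P Q) < diamondInl p := WithBot.bot_lt_coe _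
@[simp] theorem bot_lt_inr : (⊥ : Diamond P Q) < diamondInr q := WithBot.bot_lt_coe _
@[simp] theorem inl_lt_top : (diamondInl p : Diamond P Q) < ⊤ :=
  WithBot.coe_lt_coe.2 (WithTop.coe_lt_top _)
@[simp] theorem inr_lt_top : (diamondInr q : Diamond P Q) < ⊤ :=
  WithBot.coe_lt_coe.2 (WithTop.coe_lt_top _)

@[simp] theorem diamondRank_bot : diamondRank rP rQ n ⊥ = 0 := rfl
@[simp] theorem diamondRank_top : diamondRank rP rQ n ⊤ = n := rfl
@[simp] theorem diamondRank_inl : diamondRank rP rQ n (diamondInl p) = rP p.1 := rfl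
@[simp] theorem diamondRank_inr : diamondRank rP rQ n (diamondInr q) = rQ q.1 := rfl

variable {rP rQ n}

theorem GradedBy.pos (h : GradedBy rP n) : 0 < rP p.1 ∧ rP p.1 < n := by
  have h1 := h.mono _ _ (bot_lt_iff_ne_bot.2 p.2.1)
  have h2 := h.mono _ _ (lt_top_iff_ne_top.2 p.2.2)
  rw [h.bot] at h1
  rw [h.top] at h2
  exact ⟨h1, h2⟩

theorem diamondRank_lt (hn : 1 ≤ n) (hP : GradedBy rP n) (hQ : GradedBy rQ n)
    {x y : Diamond P Q} (h : x < y) :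
    diamondRank rP rQ n x < diamondRank rP rQ n y := by
  rcases diamond_cases x with rfl | rfl | ⟨p, rfl⟩ | ⟨q, rfl⟩
  · rcases diamond_cases y with rfl | rfl | ⟨p, rfl⟩ | ⟨q, rfl⟩
    · exact (lt_irrefl _ h).elim
    · exact hn
    · exact (hP.pos p).1
    · exact (hQ.pos q).1
  · exact (not_top_lt h).elim
  · rcases diamond_cases y with rfl | rfl | ⟨p', rfl⟩ | ⟨q, rfl⟩
    · exact (not_lt_bot h).elim
    · exact (hP.pos p).2
    · exact hP.mono _ _ ((inl_lt_inl _ _).1 h)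
    · exact (not_inl_lt_inr _ _ h).elim
  · rcases diamond_cases y with rfl | rfl | ⟨p, rfl⟩ | ⟨q', rfl⟩
    · exact (not_lt_bot h).elim
    · exact (hQ.pos q).2
    · exact (not_inr_lt_inl _ _ h).elim
    · exact hQ.mono _ _ ((inr_lt_inr _ _).1 h)

theorem diamond_dense (hP : GradedBy rP n) (hQ : GradedBy rQ n)
    {x y : Diamond P Q} (h : x < y)
    (h' : diamondRank rP rQ n x + 1 < diamondRank rP rQ n y) : ∃ z, x < z ∧ z < y := by
  -- a point strictly between two others of a factor survives in the diamond product
  have memP : ∀ {a b c : P}, a < b → b < c → b ≠ ⊥ ∧ b ≠ ⊤ := fun h1 h2 =>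
    ⟨(bot_le.trans_lt h1).ne', (h2.trans_le le_top).ne⟩
  have memQ : ∀ {a b c : Q}, a < b → b < c → b ≠ ⊥ ∧ b ≠ ⊤ := fun h1 h2 =>
    ⟨(bot_le.trans_lt h1).ne', (h2.trans_le le_top).ne⟩
  rcases diamond_cases x with rfl | rfl | ⟨p, rfl⟩ | ⟨q, rfl⟩
  · rcases diamond_cases y with rfl | rfl | ⟨p, rfl⟩ | ⟨q, rfl⟩
    · exact (lt_irrefl _ h).elim
    · simp only [diamondRank_bot, diamondRank_top] at h'
      have hbt : (⊥ : P) < ⊤ := bot_lt_iff_ne_bot.2 (fun hh => by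
        have h1 := hP.bot; rw [← hh, hP.top] at h1; omega)
      obtain ⟨z, h1, h2⟩ := hP.dense _ _ hbt (by rw [hP.bot, hP.top]; omega)
      exact ⟨diamondInl ⟨z, memP h1 h2⟩, by simp, by simp⟩
    · obtain ⟨z, h1, h2⟩ := hP.dense ⊥ p.1 (bot_lt_iff_ne_bot.2 p.2.1) (by
        rw [hP.bot]; simpa using h')
      exact ⟨diamondInl ⟨z, memP h1 h2⟩, by simp, by simpa using h2⟩
    · obtain ⟨z, h1, h2⟩ := hQ.dense ⊥ q.1 (bot_lt_iff_ne_bot.2 q.2.1) (by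
        rw [hQ.bot]; simpa using h')
      exact ⟨diamondInr ⟨z, memQ h1 h2⟩, by simp, by simpa using h2⟩
  · exact (not_top_lt h).elim
  · rcases diamond_cases y with rfl | rfl | ⟨p', rfl⟩ | ⟨q, rfl⟩
    · exact (not_lt_bot h).elim
    · obtain ⟨z, h1, h2⟩ := hP.dense p.1 ⊤ (lt_top_iff_ne_top.2 p.2.2) (by
        rw [hP.top]; simpa using h')
      exact ⟨diamondInl ⟨z, memP h1 h2⟩, by simpa using h1, by simp⟩
    · obtain ⟨z, h1, h2⟩ := hP.dense _ _ ((inl_lt_inl _ _).1 h) h'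
      exact ⟨diamondInl ⟨z, memP h1 h2⟩, by simpa using h1, by simpa using h2⟩
    · exact (not_inl_lt_inr _ _ h).elim
  · rcases diamond_cases y with rfl | rfl | ⟨p, rfl⟩ | ⟨q', rfl⟩
    · exact (not_lt_bot h).elim
    · obtain ⟨z, h1, h2⟩ := hQ.dense q.1 ⊤ (lt_top_iff_ne_top.2 q.2.2) (by
        rw [hQ.top]; simpa using h')
      exact ⟨diamondInr ⟨z, memQ h1 h2⟩, by simpa using h1, by simp⟩
    · exact (not_inr_lt_inl _ _ h).elim
    · obtain ⟨z, h1, h2⟩ := hQ.dense _ _ ((inr_lt_inr _ _).1 h) h'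
      exact ⟨diamondInr ⟨z, memQ h1 h2⟩, by simpa using h1, by simpa using h2⟩

/-- For `n ≥ 1` the diamond product of two graded posets of rank `n` is graded, so covering is
detected by the rank. -/
theorem diamond_covBy_iff (hn : 1 ≤ n) (hP : GradedBy rP n) (hQ : GradedBy rQ n)
    (x y : Diamond P Q) :
    x ⋖ y ↔ x < y ∧ diamondRank rP rQ n y = diamondRank rP rQ n x + 1 := by
  constructor
  · intro h
    refine ⟨h.lt, ?_⟩
    have h1 := diamondRank_lt hn hP hQ h.lt
    by_contra h2
    obtain ⟨z, h3, h4⟩ := diamond_dense hP hQ h.lt (by omega)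
    exact h.2 h3 h4
  · rintro ⟨h, hr⟩
    refine ⟨h, fun z h1 h2 => ?_⟩
    have := diamondRank_lt hn hP hQ h1
    have := diamondRank_lt hn hP hQ h2
    omega

end DiamondOrder

/-! ### Criteria for being and for not being Macaulay -/

section Abstract

variable {β : Type*} [PartialOrder β] [Fintype β]

theorem mem_shadow {A : Finset β} {y : β} : y ∈ shadow A ↔ ∃ x ∈ A, x ⋖ y := by
  simp [_root_.shadow]

/-- Sorting each level by `idx`, smallest first, is a Macaulay order as soon as
every cover between levels `1, …, n - 1` weakly decreases `idx`
and each element there has a cover, above and below, of its own index: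
in these levels the shadow of an initial segment is then a translate of that segment, and no
shadow is smaller than the set itself. The extreme levels cause no trouble: level `0` has at most
one element, covered by all of level `1`, and every element of level `n` covers all of level
`n - 1`. -/
theorem isMacaulay_of_idx (rank idx : β → ℕ) (n : ℕ)
    (inj : ∀ x y, rank x = rank y → idx x = idx y → x = y)
    (cov : ∀ x y, x ⋖ y → rank y = rank x + 1)
    (bot : ∀ x y, rank x = 0 → rank y = 1 → x ⋖ y)
    (bot' : ∀ x y, rank x = 0 → rank y = 0 → x = y)
    (le : ∀ x, rank x ≤ n)
    (top : ∀ x y, rank y = n → rank x + 1 = n → x ⋖ y)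
    (up : ∀ x, 1 ≤ rank x → rank x + 1 < n → ∃ y, x ⋖ y ∧ idx y = idx x)
    (down : ∀ y, 2 ≤ rank y → rank y < n → ∃ x, x ⋖ y ∧ idx x = idx y)
    (mono : ∀ x y, x ⋖ y → 1 ≤ rank x → rank y < n → idx y ≤ idx x) :
    IsMacaulay rank := by
  classical
  let lt : β → β → Prop := fun x y => rank x < rank y ∨ (rank x = rank y ∧ idx y < idx x)
  -- within one level `lt x y` puts `y` first, and initial segments are closed towards the first
  have seg : ∀ {d S}, IsInitSeg rank lt d S → ∀ a ∈ S, ∀ b, rank b = d → idx b ≤ idx a → b ∈ S := by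
    intro d S hS a ha b hb hab
    rcases hab.lt_or_eq with h | h
    · exact hS.2 a ha b hb (Or.inr ⟨by rw [hS.1 a ha, hb], h⟩)
    · rw [inj b a (by rw [hS.1 a ha, hb]) h]; exact ha
  have mkseg : ∀ {d S}, (∀ x ∈ S, rank x = d) →
      (∀ a ∈ S, ∀ b, rank b = d → idx b ≤ idx a → b ∈ S) → IsInitSeg rank lt d S := by
    intro d S h1 h2
    refine ⟨h1, fun a ha b hb hab => h2 a ha b hb ?_⟩
    have := h1 a ha
    rcases hab with h | h <;> omega
  have hsub : ∀ {d} {A : Finset β}, (∀ x ∈ A, rank x = d) → ∀ y ∈ shadow A, rank y = d + 1 := by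
    intro d A hA y hy
    obtain ⟨x, hx, hxy⟩ := mem_shadow.1 hy
    rw [cov x y hxy, hA x hx]
  refine ⟨lt, ⟨?_⟩, ⟨?_⟩, ⟨?_⟩, ?_, ?_⟩
  · intro a b h1 h2
    have h1' : ¬ (rank a < rank b ∨ (rank a = rank b ∧ idx b < idx a)) := h1
    have h2' : ¬ (rank b < rank a ∨ (rank b = rank a ∧ idx a < idx b)) := h2
    exact inj a b (by omega) (by omega)
  · intro a b c h1 h2
    have h1' : (rank a < rank b ∨ (rank a = rank b ∧ idx b < idx a)) := h1
    have h2' : (rank b < rank c ∨ (rank b = rank c ∧ idx c < idx b)) := h2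
    change (rank a < rank c ∨ (rank a = rank c ∧ idx c < idx a))
    omega
  · intro a h
    have h' : (rank a < rank a ∨ (rank a = rank a ∧ idx a < idx a)) := h
    omega
  · intro d A S hA hS hcard
    rcases Nat.eq_zero_or_pos d with rfl | hd
    · have : S = A := by
        have h1 : ∀ (T : Finset β), (∀ x ∈ T, rank x = 0) → ∀ x ∈ T, T = {x} := fun T hT x hx =>
          eq_singleton_iff_unique_mem.2 ⟨hx, fun y hy => bot' y x (hT y hy) (hT x hx)⟩
        rcases S.eq_empty_or_nonempty with rfl | ⟨x, hx⟩
        · exact (card_eq_zero.1 (by simpa using hcard.symm)).symm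
        · obtain ⟨y, hy⟩ : A.Nonempty := card_pos.1 (hcard ▸ card_pos.2 ⟨x, hx⟩)
          rw [h1 S hS.1 x hx, h1 A hA y hy, bot' x y (hS.1 x hx) (hA y hy)]
      rw [this]
    by_cases hdn : d + 1 < n
    · calc (shadow S).card ≤ S.card := by
            have h1 : ∀ y ∈ shadow S, ∃ x, x ⋖ y ∧ idx x = idx y := fun y hy =>
              down y (by rw [hsub hS.1 y hy]; omega) (by rw [hsub hS.1 y hy]; omega)
            choose! f hf using h1
            refine card_le_card_of_injOn f (fun y hy => ?_) (fun y hy z hz hyz => ?_)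
            · obtain ⟨x, hx, hxy⟩ := mem_shadow.1 hy
              have h2 := cov _ _ (hf y hy).1
              have h3 := hsub hS.1 y hy
              refine seg hS x hx _ (by omega) ?_
              rw [(hf y hy).2]
              exact mono x y hxy (by rw [hS.1 x hx]; omega) (by omega)
            · refine inj y z (by rw [hsub hS.1 y hy, hsub hS.1 z hz]) ?_
              rw [← (hf y hy).2, ← (hf z hz).2, hyz]
        _ = A.card := hcard
        _ ≤ (shadow A).card := by
            have h1 : ∀ x ∈ A, ∃ y, x ⋖ y ∧ idx y = idx x := fun x hx =>
              up x (by rw [hA x hx]; omega) (by rw [hA x hx]; omega)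
            choose! f hf using h1
            refine card_le_card_of_injOn f
              (fun x hx => mem_shadow.2 ⟨x, hx, (hf x hx).1⟩) (fun y hy z hz hyz => ?_)
            refine inj y z (by rw [hA y hy, hA z hz]) ?_
            rw [← (hf y hy).2, ← (hf z hz).2, hyz]
    · refine card_le_card fun y hy => ?_
      obtain ⟨x, hx, hxy⟩ := mem_shadow.1 hy
      obtain ⟨z, hz⟩ : A.Nonempty := card_pos.1 (hcard ▸ card_pos.2 ⟨x, hx⟩)
      have h1 := hsub hS.1 y hy
      have h2 := le y
      exact mem_shadow.2 ⟨z, hz, top z y (by omega) (by rw [hA z hz]; omega)⟩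
  · intro d S hS
    refine mkseg (hsub hS.1) fun a ha b hb hba => ?_
    obtain ⟨x, hx, hxa⟩ := mem_shadow.1 ha
    have hxr := hS.1 x hx
    rcases Nat.eq_zero_or_pos d with rfl | hd
    · exact mem_shadow.2 ⟨x, hx, bot x b hxr hb⟩
    have hbn := le b
    by_cases hdn : d + 1 < n
    · obtain ⟨z, hzb, hz⟩ := down b (by omega) (by omega)
      have := cov z b hzb
      have := cov x a hxa
      refine mem_shadow.2 ⟨z, seg hS x hx z (by omega) ?_, hzb⟩
      have := mono x a hxa (by omega) (by omega)
      omega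
    · exact mem_shadow.2 ⟨x, hx, top x b (by omega) (by omega)⟩

/-- A graded poset with a chain `p 1 ⋖ ⋯ ⋖ p (n - 1)` isolated from the other elements of
ranks `1, …, n - 1` is not Macaulay if every other atom has at least two upper covers and every
other coatom has at least two lower covers.
The atom condition forces the chain to come first in every level. In level `n - 2`, all elements
but the last one then have the whole of level `n - 1` as shadow, while all elements off the chain
miss `p (n - 1)`. -/
theorem not_isMacaulay (rank : β → ℕ) (n : ℕ) (hn : 3 ≤ n) (p : ℕ → β)
    (cov : ∀ x y, x ⋖ y → rank y = rank x + 1)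
    (hp : ∀ i, 1 ≤ i → i < n → rank (p i) = i)
    (pcov : ∀ i, 1 ≤ i → i + 1 < n → p i ⋖ p (i + 1))
    (pup : ∀ i y, 1 ≤ i → i + 1 < n → p i ⋖ y → y = p (i + 1))
    (pdown : ∀ i x, 1 ≤ i → i + 1 < n → x ⋖ p (i + 1) → x = p i)
    (atom : ∀ x, rank x = 1 → x ≠ p 1 → ∃ u v, u ≠ v ∧ x ⋖ u ∧ x ⋖ v)
    (coatom : ∀ x, rank x + 1 = n → x ≠ p (n - 1) → ∃ u v, u ≠ v ∧ u ⋖ x ∧ v ⋖ x)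
    (ex : ∃ x, rank x + 1 = n ∧ x ≠ p (n - 1)) :
    ¬ IsMacaulay rank := by
  classical
  rintro ⟨lt, htri, htr, hirr, hmin, hini⟩
  have tri : ∀ a b, a ≠ b → ¬ lt b a → lt a b := fun a b h1 h2 => by
    by_contra h3
    exact h1 (htri.trichotomous a b h3 h2)
  have wf : WellFounded lt := Finite.wellFounded_of_trans_of_irrefl lt
  have wf' : WellFounded (Function.swap lt) := by
    have : IsTrans β (Function.swap lt) := ⟨fun a b c h1 h2 => htr.trans _ _ _ h2 h1⟩
    have : Std.Irrefl (Function.swap lt) := ⟨fun a h => hirr.irrefl a h⟩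
    exact Finite.wellFounded_of_trans_of_irrefl _
  have shp : ∀ i, 1 ≤ i → i + 1 < n → shadow {p i} = {p (i + 1)} := by
    intro i h1 h2
    ext y
    simp only [mem_shadow, mem_singleton, exists_eq_left]
    exact ⟨pup i y h1 h2, fun h => h ▸ pcov i h1 h2⟩
  have first : ∀ i, 1 ≤ i → i + 1 < n → IsInitSeg rank lt i {p i} := by
    intro i h1
    induction i, h1 using Nat.le_induction with
    | base =>
      intro _
      obtain ⟨m, hm, hmax⟩ := wf'.has_min {x | rank x = 1} ⟨p 1, hp 1 le_rfl (by omega)⟩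
      have hm1 : IsInitSeg rank lt 1 {m} := by
        refine ⟨fun x hx => by rw [mem_singleton.1 hx]; exact hm, fun a ha b hb hab => ?_⟩
        rw [mem_singleton.1 ha] at hab
        exact (hmax b hb hab).elim
      have hcard := hmin 1 {p 1} {m}
        (fun x hx => by rw [mem_singleton.1 hx]; exact hp 1 le_rfl (by omega)) hm1 (by simp)
      rw [shp 1 le_rfl (by omega), card_singleton] at hcard
      by_cases h : m = p 1
      · rwa [h] at hm1
      · obtain ⟨u, v, huv, hu, hv⟩ := atom m hm h
        exact (huv (card_le_one.1 hcard u (mem_shadow.2 ⟨m, by simp, hu⟩) v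
          (mem_shadow.2 ⟨m, by simp, hv⟩))).elim
    | succ i h1 ih =>
      intro h2
      have := hini i _ (ih (by omega))
      rwa [shp i h1 (by omega)] at this
  obtain ⟨d, rfl⟩ : ∃ d, n = d + 2 := ⟨n - 2, by omega⟩
  have hd : 1 ≤ d := by omega
  have hpd : rank (p d) = d := hp d hd (by omega)
  obtain ⟨m, hm, hmm⟩ := wf.has_min {x | rank x = d} ⟨p d, hpd⟩
  have hm : rank m = d := hm
  have hpm : p d ≠ m := by
    rintro hpm
    obtain ⟨x, hx, hxp⟩ := ex
    obtain ⟨u, v, huv, hu, hv⟩ := coatom x hx hxp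
    have key : ∀ w, w ⋖ x → w = p d := by
      intro w hw
      have hwr : rank w = d := by have := cov w x hw; omega
      by_contra hne
      have h1 := tri (p d) w (Ne.symm hne) (by rw [hpm]; exact hmm w hwr)
      exact hne (mem_singleton.1 ((first d hd (by omega)).2 (p d) (by simp) w hwr h1))
    exact huv ((key u hu).trans (key v hv).symm)
  set L : Finset β := univ.filter fun x => rank x = d with hL
  have hpL : p d ∈ L := by simp [hL, hpd]
  have hmL : m ∈ L := by simp [hL, hm]
  have hS : IsInitSeg rank lt d (L.erase m) := by
    refine ⟨fun x hx => by simpa [hL] using (mem_erase.1 hx).2, fun a ha b hb hab => ?_⟩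
    refine mem_erase.2 ⟨?_, by simp [hL, hb]⟩
    rintro rfl
    exact hmm a (by simpa [hL] using (mem_erase.1 ha).2) hab
  have hcard := hmin d (L.erase (p d)) (L.erase m)
    (fun x hx => by simpa [hL] using (mem_erase.1 hx).2) hS
    (by rw [card_erase_of_mem hmL, card_erase_of_mem hpL])
  refine absurd hcard (not_le.2 (card_lt_card ?_))
  rw [ssubset_iff_of_subset]
  · refine ⟨p (d + 1), mem_shadow.2 ⟨p d, mem_erase.2 ⟨hpm, hpL⟩, pcov d hd (by omega)⟩, ?_⟩
    intro h
    obtain ⟨x, hx, hxp⟩ := mem_shadow.1 h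
    exact (mem_erase.1 hx).1 (pdown d x hd (by omega) hxp)
  · intro y hy
    obtain ⟨x, hx, hxy⟩ := mem_shadow.1 hy
    obtain ⟨hxp, hxL⟩ := mem_erase.1 hx
    have hxr : rank x = d := by simpa [hL] using hxL
    have hyr := cov x y hxy
    have hyp : y ≠ p (d + 1) := by
      rintro rfl
      exact hxp (pdown d x hd (by omega) hxy)
    obtain ⟨u, v, huv, hu, hv⟩ := coatom y (by omega) hyp
    have hur := cov u y hu
    have hvr := cov v y hv
    by_cases hum : u = m
    · refine mem_shadow.2 ⟨v, mem_erase.2 ⟨fun h => huv (hum.trans h.symm), ?_⟩, hv⟩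
      simp [hL]; omega
    · refine mem_shadow.2 ⟨u, mem_erase.2 ⟨hum, ?_⟩, hu⟩
      simp [hL]; omega

end Abstract

/-! ### Application to a path and a box -/

theorem shape_iff {k : ℕ} (e : Fin k → ℕ) (he : ∀ i, 1 ≤ e i) :
    (k = 1 ∨ (k = 2 ∧ ∃ i, e i = 1)) ↔ ∃ j, ∑ i, e i ≤ e j + 1 := by
  constructor
  · rintro (rfl | ⟨rfl, i, hi⟩)
    · exact ⟨0, by simp⟩
    · refine ⟨i.rev, ?_⟩
      rw [Fin.sum_univ_two]
      fin_cases i <;> simp_all [Fin.rev] <;> omega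
  · rintro ⟨j, hj⟩
    have h5 := sum_erase_add univ e (mem_univ j)
    have h6 : (univ.erase j).card • 1 ≤ ∑ l ∈ univ.erase j, e l :=
      card_nsmul_le_sum _ _ _ fun l _ => he l
    rw [card_erase_of_mem (mem_univ j), card_univ, Fintype.card_fin, smul_eq_mul] at h6
    have hk := j.2
    have : k = 1 ∨ k = 2 := by omega
    rcases this with rfl | rfl
    · exact Or.inl rfl
    · refine Or.inr ⟨rfl, ?_⟩
      rw [Fin.sum_univ_two] at hj
      have h0 := he 0
      have h1 := he 1
      fin_cases j
      · exact ⟨1, by simp at hj; omega⟩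
      · exact ⟨0, by simp at hj; omega⟩

/-- In the degenerate case `n = 0` the type `Diamond` still has two distinct elements `⊥ ⋖ ⊤`,
both of rank `0`, so a shadow can stay in its own level. -/
theorem not_isMacaulay_zero (e : Fin 0 → ℕ) :
    ¬ IsMacaulay (diamondRank Fin.val boxFRank 0 : Diamond (Fin (0 + 1)) (BoxF e) → ℕ) := by
  rintro ⟨lt, -, -, -, -, hini⟩
  have h0 : ∀ x : Diamond (Fin (0 + 1)) (BoxF e), x = ⊥ ∨ x = ⊤ := by
    intro x
    rcases diamond_cases x with h | h | ⟨p, -⟩ | ⟨q, -⟩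
    · exact Or.inl h
    · exact Or.inr h
    · exact (p.2.1 (Fin.subsingleton_one.elim _ _)).elim
    · exact (q.2.1 (Subsingleton.elim _ _)).elim
  have hr : ∀ x : Diamond (Fin (0 + 1)) (BoxF e), diamondRank Fin.val boxFRank 0 x = 0 := by
    intro x
    rcases h0 x with rfl | rfl <;> rfl
  have hc : (⊥ : Diamond (Fin (0 + 1)) (BoxF e)) ⋖ ⊤ := by
    refine ⟨WithBot.bot_lt_coe _, fun z h1 h2 => ?_⟩
    rcases h0 z with rfl | rfl
    · exact lt_irrefl _ h1
    · exact lt_irrefl _ h2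
  have := (hini 0 univ ⟨fun x _ => hr x, fun _ _ b _ _ => mem_univ b⟩).1 ⊤
    (mem_shadow.2 ⟨⊥, mem_univ _, hc⟩)
  rw [hr] at this
  omega

theorem stmt11_pos {k : ℕ} (n : ℕ) (e : Fin k → ℕ) (he : ∀ i, 1 ≤ e i)
    (hs : ∑ i, e i = n) (j : Fin k) (hj : ∑ i, e i ≤ e j + 1) :
    IsMacaulay (diamondRank Fin.val boxFRank n : Diamond (Fin (n + 1)) (BoxF e) → ℕ) := by
  subst hs
  have h5 := sum_erase_add univ e (mem_univ j)
  have hn : 1 ≤ ∑ i, e i := by have := he j; omega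
  have gP := gradedBy_fin (∑ i, e i)
  have gQ := gradedBy_box (e := e)
  have hcov := diamond_covBy_iff hn gP gQ
  -- the chain gets index `0`; a box element gets `2` or `1` by its coordinates other than `j`
  let idx : Diamond (Fin (∑ i, e i + 1)) (BoxF e) → ℕ :=
    WithBot.recBotCoe 0 (WithTop.recTopCoe 0
      (Sum.elim (fun _ => 0) (fun q => 2 - ∑ l ∈ univ.erase j, (q.1 l).val)))
  have idxl : ∀ p, idx (diamondInl p) = 0 := fun _ => rfl
  have idxr : ∀ q, idx (diamondInr q) = 2 - ∑ l ∈ univ.erase j, (q.1 l).val := fun _ => rfl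
  have rl : ∀ p : {p : Fin (∑ i, e i + 1) // p ≠ ⊥ ∧ p ≠ ⊤},
      0 < p.1.val ∧ p.1.val < ∑ i, e i := fun p => gP.pos p
  have rr : ∀ q : {q : BoxF e // q ≠ ⊥ ∧ q ≠ ⊤},
      0 < boxFRank q.1 ∧ boxFRank q.1 < ∑ i, e i := fun q => gQ.pos q
  have small : ∀ q : BoxF e, ∑ l ∈ univ.erase j, (q l).val ≤ 1 := fun q => by
    have := sum_erase_le q j; omega
  refine isMacaulay_of_idx _ idx (∑ i, e i) ?_ (fun x y h => ((hcov x y).1 h).2)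
    ?_ ?_ ?_ ?_ ?_ ?_ ?_
  · intro x y hr hi
    rcases diamond_cases x with rfl | rfl | ⟨p, rfl⟩ | ⟨q, rfl⟩ <;>
    rcases diamond_cases y with rfl | rfl | ⟨p', rfl⟩ | ⟨q', rfl⟩ <;>
    simp only [diamondRank_bot, diamondRank_top, diamondRank_inl, diamondRank_inr, idxl, idxr] at hr hi
    · rfl
    · omega
    · have := rl p'; omega
    · have := rr q'; omega
    · omega
    · rfl
    · have := rl p'; omega
    · have := rr q'; omega
    · have := rl p; omega
    · have := rl p; omega
    · rw [Subtype.ext (Fin.ext hr)]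
    · have := small q'.1; omega
    · have := rr q; omega
    · have := rr q; omega
    · have := small q.1; omega
    · have h1 := small q.1
      have h2 := small q'.1
      rw [Subtype.ext (box_inj he j hj q.1 q'.1 (by omega) hr)]
  · intro x y hx hy
    have hxb : x = ⊥ := by
      rcases diamond_cases x with rfl | rfl | ⟨p, rfl⟩ | ⟨q, rfl⟩ <;>
        simp only [diamondRank_bot, diamondRank_top, diamondRank_inl, diamondRank_inr] at hx
      · rfl
      · omega
      · have := rl p; omega
      · have := rr q; omega
    refine (hcov x y).2 ⟨?_, by omega⟩
    rw [hxb, bot_lt_iff_ne_bot]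
    rintro rfl
    simp at hy
  · intro x y hx hy
    rcases diamond_cases x with rfl | rfl | ⟨p, rfl⟩ | ⟨q, rfl⟩ <;>
    rcases diamond_cases y with rfl | rfl | ⟨p', rfl⟩ | ⟨q', rfl⟩ <;>
    simp only [diamondRank_bot, diamondRank_top, diamondRank_inl, diamondRank_inr] at hx hy <;>
    first
      | rfl
      | omega
      | (have := rl p; omega)
      | (have := rr q; omega)
      | (have := rl p'; omega)
      | (have := rr q'; omega)
  · intro x
    rcases diamond_cases x with rfl | rfl | ⟨p, rfl⟩ | ⟨q, rfl⟩
    · exact Nat.zero_le _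
    · exact le_rfl
    · exact (rl p).2.le
    · exact (rr q).2.le
  · intro x y hy hx
    have hyt : y = ⊤ := by
      rcases diamond_cases y with rfl | rfl | ⟨p, rfl⟩ | ⟨q, rfl⟩ <;>
        simp only [diamondRank_bot, diamondRank_top, diamondRank_inl, diamondRank_inr] at hy
      · omega
      · rfl
      · have := rl p; omega
      · have := rr q; omega
    refine (hcov x y).2 ⟨?_, by omega⟩
    rw [hyt, lt_top_iff_ne_top]
    rintro rfl
    simp at hx
  · intro x h1 h2
    rcases diamond_cases x with rfl | rfl | ⟨p, rfl⟩ | ⟨q, rfl⟩ <;>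
      simp only [diamondRank_bot, diamondRank_top, diamondRank_inl, diamondRank_inr] at h1 h2
    · omega
    · omega
    · have hne : (⟨p.1.val + 1, by omega⟩ : Fin (∑ i, e i + 1)) ≠ ⊥ ∧
          (⟨p.1.val + 1, by omega⟩ : Fin (∑ i, e i + 1)) ≠ ⊤ :=
        gP.proper (by simp only; omega) (by simp only; omega)
      exact ⟨diamondInl ⟨_, hne⟩, (hcov _ _).2 ⟨by simp [Fin.lt_def], by simp⟩, rfl⟩
    · have h3 := boxFRank_erase q.1 j
      obtain ⟨y, hy, hyr, hyj, hyl⟩ := box_up q.1 j (by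
        omega)
      have hsum : ∑ l ∈ univ.erase j, (y l).val = ∑ l ∈ univ.erase j, (q.1 l).val :=
        sum_congr rfl fun l hl => by rw [hyl l (mem_erase.1 hl).1]
      refine ⟨diamondInr ⟨y, gQ.proper (x := y) (by omega) (by omega)⟩,
        (hcov _ _).2 ⟨by simpa using hy, by simpa using hyr⟩, ?_⟩
      simp only [idxr, hsum]
  · intro y h1 h2
    rcases diamond_cases y with rfl | rfl | ⟨p, rfl⟩ | ⟨q, rfl⟩ <;>
      simp only [diamondRank_bot, diamondRank_top, diamondRank_inl, diamondRank_inr] at h1 h2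
    · omega
    · omega
    · have hne : (⟨p.1.val - 1, by omega⟩ : Fin (∑ i, e i + 1)) ≠ ⊥ ∧
          (⟨p.1.val - 1, by omega⟩ : Fin (∑ i, e i + 1)) ≠ ⊤ :=
        gP.proper (by simp only; omega) (by simp only; omega)
      exact ⟨diamondInl ⟨_, hne⟩,
        (hcov _ _).2 ⟨(inl_lt_inl _ _).2 (Fin.lt_def.2 (by simp only; omega)),
          by simp only [diamondRank_inl]; omega⟩, rfl⟩
    · have h3 := boxFRank_erase q.1 j
      obtain ⟨y, hy, hyr, hyj, hyl⟩ := box_down q.1 j (by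
        have := small q.1
        omega)
      have hsum : ∑ l ∈ univ.erase j, (y l).val = ∑ l ∈ univ.erase j, (q.1 l).val :=
        sum_congr rfl fun l hl => by rw [hyl l (mem_erase.1 hl).1]
      refine ⟨diamondInr ⟨y, gQ.proper (x := y) (by omega) (by omega)⟩,
        (hcov _ _).2 ⟨by simpa using hy, by simpa using hyr⟩, ?_⟩
      simp only [idxr, hsum]
  · intro x y hxy h1 h2
    have hlt := hxy.lt
    rcases diamond_cases x with rfl | rfl | ⟨p, rfl⟩ | ⟨q, rfl⟩
    · simp at h1
    · exact (not_top_lt hlt).elim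
    · rcases diamond_cases y with rfl | rfl | ⟨p', rfl⟩ | ⟨q', rfl⟩
      · exact Nat.zero_le _
      · exact Nat.zero_le _
      · exact Nat.zero_le _
      · exact (not_inl_lt_inr _ _ hlt).elim
    · rcases diamond_cases y with rfl | rfl | ⟨p', rfl⟩ | ⟨q', rfl⟩
      · exact Nat.zero_le _
      · exact Nat.zero_le _
      · exact (not_inr_lt_inl _ _ hlt).elim
      · rw [idxr, idxr]
        have : ∑ l ∈ univ.erase j, (q.1 l).val ≤ ∑ l ∈ univ.erase j, (q'.1 l).val :=
          sum_le_sum fun l _ => ((inr_lt_inr _ _).1 hlt).le l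
        omega

theorem stmt11_neg {k : ℕ} (n : ℕ) (e : Fin k → ℕ) (h0 : 3 ≤ n)
    (hs : ∑ i, e i = n) (hj : ∀ j, e j + 2 ≤ ∑ i, e i) :
    ¬ IsMacaulay (diamondRank Fin.val boxFRank n : Diamond (Fin (n + 1)) (BoxF e) → ℕ) := by
  subst hs
  have hn : 1 ≤ ∑ i, e i := by omega
  have gP := gradedBy_fin (∑ i, e i)
  have gQ := gradedBy_box (e := e)
  have hcov := diamond_covBy_iff hn gP gQ
  have rl : ∀ p : {p : Fin (∑ i, e i + 1) // p ≠ ⊥ ∧ p ≠ ⊤},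
      0 < p.1.val ∧ p.1.val < ∑ i, e i := fun p => gP.pos p
  have rr : ∀ q : {q : BoxF e // q ≠ ⊥ ∧ q ≠ ⊤},
      0 < boxFRank q.1 ∧ boxFRank q.1 < ∑ i, e i := fun q => gQ.pos q
  have memP : ∀ i (h1 : 1 ≤ i) (h2 : i < ∑ i, e i),
      (⟨i, by omega⟩ : Fin (∑ i, e i + 1)) ≠ ⊥ ∧ (⟨i, by omega⟩ : Fin (∑ i, e i + 1)) ≠ ⊤ :=
    fun i h1 h2 => gP.proper h1 h2
  let p : ℕ → Diamond (Fin (∑ i, e i + 1)) (BoxF e) := fun i =>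
    if h : 1 ≤ i ∧ i < ∑ i, e i then diamondInl ⟨⟨i, by omega⟩, memP i h.1 h.2⟩ else ⊥
  have hp : ∀ i (h1 : 1 ≤ i) (h2 : i < ∑ i, e i),
      p i = diamondInl ⟨⟨i, by omega⟩, memP i h1 h2⟩ := fun i h1 h2 => dif_pos ⟨h1, h2⟩
  have hpl : ∀ a, p a.1.val = diamondInl a := fun a => hp _ (rl a).1 (rl a).2
  refine not_isMacaulay _ (∑ i, e i) h0 p (fun x y h => ((hcov x y).1 h).2) ?_ ?_ ?_ ?_ ?_ ?_ ?_
  · intro i h1 h2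
    rw [hp i h1 h2, diamondRank_inl]
  · intro i h1 h2
    rw [hp i h1 (by omega), hp (i + 1) (by omega) h2, hcov]
    exact ⟨by simp [Fin.lt_def], rfl⟩
  · intro i y h1 h2 h
    rw [hp i h1 (by omega), hcov] at h
    obtain ⟨hlt, hr⟩ := h
    rcases diamond_cases y with rfl | rfl | ⟨a, rfl⟩ | ⟨q, rfl⟩
    · exact (not_lt_bot hlt).elim
    · simp at hr; omega
    · rw [← hpl a]
      simp only [diamondRank_inl] at hr
      rw [hr]
    · exact (not_inl_lt_inr _ _ hlt).elim
  · intro i x h1 h2 h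
    rw [hp (i + 1) (by omega) (by omega), hcov] at h
    obtain ⟨hlt, hr⟩ := h
    rcases diamond_cases x with rfl | rfl | ⟨a, rfl⟩ | ⟨q, rfl⟩
    · simp at hr; omega
    · exact (not_top_lt hlt).elim
    · rw [← hpl a]
      simp only [diamondRank_inl] at hr
      congr 1; omega
    · exact (not_inr_lt_inl _ _ hlt).elim
  · intro x hr hx
    rcases diamond_cases x with rfl | rfl | ⟨a, rfl⟩ | ⟨q, rfl⟩ <;>
      simp only [diamondRank_bot, diamondRank_top, diamondRank_inl, diamondRank_inr] at hr
    · omega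
    · omega
    · rw [← hpl a, hr] at hx
      exact (hx rfl).elim
    · obtain ⟨u, v, huv, hu, hv, hur, hvr⟩ := box_two_up hj h0 q.1 hr
      refine ⟨diamondInr ⟨u, gQ.proper (x := u) (by omega) (by omega)⟩,
        diamondInr ⟨v, gQ.proper (x := v) (by omega) (by omega)⟩, by simpa using huv,
        (hcov _ _).2 ⟨by simpa using hu, by simp [hr, hur]⟩,
        (hcov _ _).2 ⟨by simpa using hv, by simp [hr, hvr]⟩⟩
  · intro x hr hx
    rcases diamond_cases x with rfl | rfl | ⟨a, rfl⟩ | ⟨q, rfl⟩ <;>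
      simp only [diamondRank_bot, diamondRank_top, diamondRank_inl, diamondRank_inr] at hr
    · omega
    · omega
    · rw [← hpl a, show a.1.val = ∑ i, e i - 1 by omega] at hx
      exact (hx rfl).elim
    · obtain ⟨u, v, huv, hu, hv, hur, hvr⟩ := box_two_down hj h0 q.1 hr
      refine ⟨diamondInr ⟨u, gQ.proper (x := u) (by omega) (by omega)⟩,
        diamondInr ⟨v, gQ.proper (x := v) (by omega) (by omega)⟩, by simpa using huv,
        (hcov _ _).2 ⟨by simpa using hu, by simp only [diamondRank_inr]; omega⟩,
        (hcov _ _).2 ⟨by simpa using hv, by simp only [diamondRank_inr]; omega⟩⟩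
  · have : ∃ j, 1 ≤ e j := by
      by_contra! h
      have : ∑ i, e i = 0 := sum_eq_zero fun l _ => by have := h l; omega
      omega
    obtain ⟨j, hj1⟩ := this
    obtain ⟨y, hy, hyr, -, -⟩ := box_down (⊤ : BoxF e) j (by simpa [Fin.top_eq_last] using hj1)
    rw [gQ.top] at hyr
    refine ⟨diamondInr ⟨y, gQ.proper (x := y) (by omega) (by omega)⟩, by simp only [diamondRank_inr]; omega, ?_⟩
    rw [hp _ (by omega) (by omega)]
    exact (inl_ne_inr _ _).symm

/-- The diamond product of a path poset of rank n and a box poset of rank n (with k factors,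
side lengths `e i + 1 ≥ 2`) is Macaulay iff the box is itself a path (k = 1) or a 2-by-l
box (k = 2 with one side of length 2). -/
theorem stmt11 {k : ℕ} (n : ℕ) (e : Fin k → ℕ) (he : ∀ i, 1 ≤ e i)
    (hs : ∑ i, e i = n) :
    IsMacaulay (diamondRank Fin.val boxFRank n :
      Diamond (Fin (n + 1)) (BoxF e) → ℕ) ↔
    (k = 1 ∨ (k = 2 ∧ ∃ i, e i = 1)) := by
  rw [shape_iff e he]
  constructor
  · contrapose!
    intro h
    rcases Nat.eq_zero_or_pos k with rfl | hk
    · obtain rfl : n = 0 := by rw [← hs]; simp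
      exact not_isMacaulay_zero e
    · have h1 := h ⟨0, hk⟩
      have h2 := he ⟨0, hk⟩
      exact stmt11_neg n e (by omega) hs h
  · rintro ⟨j, hj⟩
    exact stmt11_pos n e he hs j hj
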